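/- arXiv:2106.05149 — 13 statements merged into one kernel-verified Lean document; each statement's English description precedes it below -/
import Mathlib

section
/- Let B be a left brace and define r : B×B → B×B by r(a,b) = (λ_a(b), λ_{λ_a(b)}^{-1}(a)), where λ_a(b) = a∘b − a. Then (B,r) is a non-degenerate involutive set-theoretic solution of the Yang–Baxter equation: r₁r₂r₁ = r₂r₁r₂, r² = id, and writing r(a,b) = (λ_a(b), τ_b(a)), all the maps λ_a and τ_a are bijections of B. -/
/-- A left brace: `(B,+)` is an abelian group, `(B,∘)` is a group, and
`a∘(b+c) + a = a∘b + a∘c`. -/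
class LeftBrace (B : Type*) extends AddCommGroup B where
  circ : B → B → B
  circ_assoc : ∀ a b c : B, circ (circ a b) c = circ a (circ b c)
  cone : B
  circ_cone : ∀ a : B, circ a cone = a
  cone_circ : ∀ a : B, circ cone a = a
  cinv : B → B
  circ_cinv : ∀ a : B, circ a (cinv a) = cone
  cinv_circ : ∀ a : B, circ (cinv a) a = cone
  left_brace : ∀ a b c : B, circ a (b + c) + a = circ a b + circ a c

/-- The lambda map of a left brace: `λ_a(b) = a∘b − a`. -/
def lam {B : Type*} [LeftBrace B] (a b : B) : B := LeftBrace.circ a b - a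

/-- `τ_b(a) = λ_{λ_a(b)}⁻¹(a)`. -/
noncomputable def tauB {B : Type*} [LeftBrace B] (b a : B) : B :=
  Function.invFun (lam (lam a b)) a

/-- The map `r(a,b) = (λ_a(b), λ_{λ_a(b)}⁻¹(a))` associated to a left brace. -/
noncomputable def rB {B : Type*} [LeftBrace B] : B × B → B × B :=
  fun p => (lam p.1 p.2, tauB p.2 p.1)

/-- `r₁ = r × id` on `B × B × B`. -/
noncomputable def rB1 {B : Type*} [LeftBrace B] : B × B × B → B × B × B :=
  fun t => ((rB (t.1, t.2.1)).1, (rB (t.1, t.2.1)).2, t.2.2)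

/-- `r₂ = id × r` on `B × B × B`. -/
noncomputable def rB2 {B : Type*} [LeftBrace B] : B × B × B → B × B × B :=
  fun t => (t.1, rB t.2)

/-!
The group `(B, ∘)` acts on `B` from the left by `λ`, and on the right by `τ`, and
`λ_a(b) ∘ τ_b(a) = a ∘ b`. For any group with two such actions, `r` preserves products. Hence both
sides of the Yang–Baxter equation send `(a, b, c)` to triples with the same product; the action laws
give the same first and last entries, so by cancellation the middle entries agree as well.
For a brace, moreover, `r` fixes the first entry `a` when applied twice, and cancellation again
recovers `b`.
-/

section YangBaxter

variable {X : Type*}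

/-- The map `r × id` on triples. -/
def applyFirstTwo (r : X × X → X × X) (t : X × X × X) : X × X × X :=
  ((r (t.1, t.2.1)).1, (r (t.1, t.2.1)).2, t.2.2)

/-- The map `id × r` on triples. -/
def applyLastTwo (r : X × X → X × X) (t : X × X × X) : X × X × X :=
  (t.1, r t.2)

/-- The set-theoretic Yang–Baxter equation `r₁r₂r₁ = r₂r₁r₂`. -/
def IsYangBaxter (r : X × X → X × X) : Prop :=
  applyFirstTwo r ∘ applyLastTwo r ∘ applyFirstTwo r =
    applyLastTwo r ∘ applyFirstTwo r ∘ applyLastTwo r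

end YangBaxter

/-- A braiding operator on a group, in the sense of Lu, Yan and Zhu: a left and a right action of
the group on its underlying set such that `(a ⇀ b) * (a ↼ b) = a * b`. The left action `a ⇀ b` is
`left a b`; the right action `a ↼ b` is encoded as the left action `right (op b) a` of the opposite
group. -/
structure BraidingOperator (G : Type*) [Group G] where
  left : G →* Equiv.Perm G
  right : Gᵐᵒᵖ →* Equiv.Perm G
  left_mul_right : ∀ a b : G, left a b * right (MulOpposite.op b) a = a * b

namespace BraidingOperator

open Function MulOpposite

variable {G : Type*} [Group G] (β : BraidingOperator G)

/-- The map `r(a, b) = (a ⇀ b, a ↼ b)` of a braiding operator. -/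
def braiding (p : G × G) : G × G :=
  (β.left p.1 p.2, β.right (op p.2) p.1)

theorem left_left_right (a b c : G) :
    β.left (β.left a b) (β.left (β.right (op b) a) c) = β.left a (β.left b c) := by
  simp only [← Equiv.Perm.mul_apply, ← map_mul, β.left_mul_right]

theorem right_right_left (a b c : G) :
    β.right (op (β.right (op c) b)) (β.right (op (β.left b c)) a) =
      β.right (op c) (β.right (op b) a) := by
  simp only [← Equiv.Perm.mul_apply, ← map_mul, ← op_mul, β.left_mul_right]

theorem mul_applyFirstTwo_braiding (t : G × G × G) :
    (applyFirstTwo β.braiding t).1 *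
        ((applyFirstTwo β.braiding t).2.1 * (applyFirstTwo β.braiding t).2.2) =
      t.1 * (t.2.1 * t.2.2) := by
  simp only [applyFirstTwo, braiding, ← mul_assoc, β.left_mul_right]

theorem mul_applyLastTwo_braiding (t : G × G × G) :
    (applyLastTwo β.braiding t).1 *
        ((applyLastTwo β.braiding t).2.1 * (applyLastTwo β.braiding t).2.2) =
      t.1 * (t.2.1 * t.2.2) := by
  simp only [applyLastTwo, braiding, β.left_mul_right]

theorem isYangBaxter_braiding : IsYangBaxter β.braiding := by
  funext t
  set u := (applyFirstTwo β.braiding ∘ applyLastTwo β.braiding ∘ applyFirstTwo β.braiding) t with hu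
  set v := (applyLastTwo β.braiding ∘ applyFirstTwo β.braiding ∘ applyLastTwo β.braiding) t with hv
  have first_eq : u.1 = v.1 := β.left_left_right t.1 t.2.1 t.2.2
  have last_eq : u.2.2 = v.2.2 := (β.right_right_left t.1 t.2.1 t.2.2).symm
  have product_eq : u.1 * (u.2.1 * u.2.2) = v.1 * (v.2.1 * v.2.2) := by
    simp only [hu, hv, comp_apply, mul_applyFirstTwo_braiding, mul_applyLastTwo_braiding]
  have middle_eq : u.2.1 = v.2.1 := by
    rw [first_eq, last_eq] at product_eq
    exact mul_right_cancel (mul_left_cancel product_eq)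
  exact Prod.ext first_eq (Prod.ext middle_eq last_eq)

theorem involutive_braiding
    (left_left : ∀ a b, β.left (β.left a b) (β.right (op b) a) = a) :
    Involutive β.braiding := by
  rintro ⟨a, b⟩
  have product_eq := β.left_mul_right (β.left a b) (β.right (op b) a)
  rw [left_left, β.left_mul_right] at product_eq
  exact Prod.ext (left_left a b) (mul_left_cancel product_eq)

end BraidingOperator

namespace LeftBrace

open Function MulOpposite

variable {B : Type*} [LeftBrace B]

/-- The multiplicative group `(B, ∘)` of a left brace. It is not a global instance, because it
puts `*` and `1` on every left brace; below, they stand for `∘` and its identity. -/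
abbrev circGroup : Group B where
  mul := circ
  mul_assoc := circ_assoc
  one := cone
  one_mul := cone_circ
  mul_one := circ_cone
  inv := cinv
  inv_mul_cancel := cinv_circ

attribute [local instance] circGroup

theorem add_lam (a b : B) : a + lam a b = a * b :=
  add_sub_cancel a (circ a b)

theorem lam_add (a b c : B) : lam a (b + c) = lam a b + lam a c := by
  calc lam a (b + c) = a * (b + c) + a - a - a := by rw [add_sub_cancel_right]; rfl
    _ = a * b + a * c - a - a := congrArg (· - a - a) (left_brace a b c)
    _ = lam a b + lam a c := by simp only [← add_lam]; abel

theorem lam_zero (a : B) : lam a 0 = 0 := by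
  have h := lam_add a 0 0
  rwa [add_zero, left_eq_add] at h

theorem one_eq_zero : (1 : B) = 0 := by
  rw [← one_mul (0 : B), ← add_lam, lam_zero, add_zero]

theorem lam_one_left (b : B) : lam 1 b = b := by
  rw [← zero_add (lam 1 b), ← one_eq_zero, add_lam, one_mul]

theorem lam_mul_left (a b c : B) : lam (a * b) c = lam a (lam b c) := by
  apply add_left_cancel (a := a * b)
  calc a * b + lam (a * b) c = a * (b * c) := by rw [add_lam, mul_assoc]
    _ = a + (lam a b + lam a (lam b c)) := by rw [← add_lam a, ← add_lam b, lam_add]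
    _ = a * b + lam a (lam b c) := by rw [← add_assoc, add_lam]

/-- The left action of `(B, ∘)` on `B` by the maps `lam a`. -/
def lambda : B →* Equiv.Perm B :=
  MonoidHom.toHomPerm
    { toFun := lam
      map_one' := funext lam_one_left
      map_mul' := fun a b => funext (lam_mul_left a b) }

theorem lam_bijective (a : B) : Bijective (lam a) :=
  (lambda a).bijective

theorem lam_lam_tauB (a b : B) : lam (lam a b) (tauB b a) = a :=
  invFun_eq ((lam_bijective (lam a b)).surjective a)

theorem lam_mul_tauB (a b : B) : lam a b * tauB b a = a * b := by
  rw [← add_lam, lam_lam_tauB, add_comm, add_lam]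

theorem lam_mul_right (a b c : B) : lam a (b * c) = lam a b * lam (tauB b a) c := by
  calc lam a (b * c) = lam a b + lam (a * b) c := by rw [← add_lam, lam_add, lam_mul_left]
    _ = lam a b + lam (lam a b) (lam (tauB b a) c) := by rw [← lam_mul_tauB, lam_mul_left]
    _ = lam a b * lam (tauB b a) c := add_lam _ _

theorem tauB_one (a : B) : tauB 1 a = a := by
  have h := lam_mul_tauB a 1
  rwa [one_eq_zero, lam_zero, ← one_eq_zero, one_mul, mul_one] at h

theorem tauB_mul (a b c : B) : tauB (b * c) a = tauB c (tauB b a) := by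
  apply mul_left_cancel (a := lam a (b * c))
  calc lam a (b * c) * tauB (b * c) a = lam a b * tauB b a * c := by
        rw [lam_mul_tauB, lam_mul_tauB, mul_assoc]
    _ = lam a b * (lam (tauB b a) c * tauB c (tauB b a)) := by
        rw [lam_mul_tauB (tauB b a), mul_assoc]
    _ = lam a (b * c) * tauB c (tauB b a) := by rw [lam_mul_right, mul_assoc]

/-- The right action of `(B, ∘)` on `B` by the maps `tauB b`, as an action of the opposite group. -/
noncomputable def tau : Bᵐᵒᵖ →* Equiv.Perm B :=
  MonoidHom.toHomPerm
    { toFun := fun b => tauB b.unop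
      map_one' := funext tauB_one
      map_mul' := fun b c => funext fun a => tauB_mul a c.unop b.unop }

theorem tauB_bijective (b : B) : Bijective (tauB b) :=
  (tau (op b)).bijective

/-- The braiding operator of a left brace on `(B, ∘)`, whose braiding is `rB`. -/
noncomputable def braidingOperator : BraidingOperator B where
  left := lambda
  right := tau
  left_mul_right := lam_mul_tauB

theorem isYangBaxter_rB : IsYangBaxter (rB : B × B → B × B) :=
  braidingOperator.isYangBaxter_braiding

theorem involutive_rB : Involutive (rB : B × B → B × B) :=
  braidingOperator.involutive_braiding lam_lam_tauB

end LeftBrace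

/-- A left brace gives a non-degenerate involutive set-theoretic solution of
the Yang–Baxter equation. -/
theorem stmt_4 {B : Type*} [LeftBrace B] :
    rB1 ∘ rB2 ∘ rB1 = (rB2 ∘ rB1 ∘ rB2 : B × B × B → B × B × B) ∧
    rB ∘ rB = (id : B × B → B × B) ∧
    (∀ a : B, Function.Bijective (lam a)) ∧
    (∀ b : B, Function.Bijective (fun a : B => tauB b a)) := by
  exact ⟨LeftBrace.isYangBaxter_rB, LeftBrace.involutive_rB.comp_self,
    LeftBrace.lam_bijective, LeftBrace.tauB_bijective⟩
end

section
/- If (R,+,*) is a Jacobson radical ring, then (R,+,∘) with the adjoint multiplication a∘b = a + b + a*b is a two-sided brace (both a left and a right brace). Conversely, if (B,+,∘) is a two-sided brace, then (B,+,*) with the ring multiplication a*b = a∘b − a − b is a Jacobson radical ring. -/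
/-- A two-sided brace: a left brace which is also a right brace. -/
class TwoSidedBrace (B : Type*) extends LeftBrace B where
  right_brace : ∀ a b c : B, circ (a + b) c + c = circ a c + circ b c

/-- The adjoint multiplication `a∘b = a + b + a*b` on a ring. -/
def adjMul {R : Type*} [NonUnitalRing R] (a b : R) : R := a + b + a * b

/-- The ring multiplication `a*b = a∘b − a − b` on a brace. -/
def starB {B : Type*} [LeftBrace B] (a b : B) : B :=
  LeftBrace.circ a b - a - b

/-!
The adjoint multiplication is multiplication of the elements `1 + a` of the unitization, so it is a
monoid law with unit `0`; `PreQuasiregular R` is `R` with this monoid structure. If every element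
has a right inverse, then a right inverse `b` of `a` has both the left inverse `a` and a right
inverse; these agree, so `b` is a two-sided inverse of `a`.

Conversely, each brace axiom is one distributive law for `*`. With both of them, `(a ∘ b) ∘ c` and
`a ∘ (b ∘ c)` expand to the same sum of terms of degree at most two, plus `(a * b) * c` and
`a * (b * c)` respectively, so that associativity of `∘` passes to `*`.
-/

universe u v

section AdjointMultiplication

open PreQuasiregular (equiv)

variable {R : Type*} [NonUnitalRing R]

theorem equiv_adjMul (a b : R) : equiv (adjMul a b) = equiv a * equiv b :=
  congrArg PreQuasiregular.mk (congrArg (· + a * b) (add_comm a b))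

theorem adjMul_eq_zero_iff {a b : R} : adjMul a b = 0 ↔ equiv a * equiv b = 1 := by
  rw [← equiv_adjMul]
  exact equiv.injective.eq_iff.symm

theorem adjMul_assoc (a b c : R) : adjMul (adjMul a b) c = adjMul a (adjMul b c) :=
  equiv.injective <| by simp only [equiv_adjMul, mul_assoc]

theorem adjMul_zero (a : R) : adjMul a 0 = a := by
  simp [adjMul]

theorem zero_adjMul (a : R) : adjMul 0 a = a := by
  simp [adjMul]

theorem adjMul_add_add_left (a b c : R) : adjMul a (b + c) + a = adjMul a b + adjMul a c := by
  simp only [adjMul, mul_add]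
  abel

theorem add_adjMul_add_right (a b c : R) : adjMul (a + b) c + c = adjMul a c + adjMul b c := by
  simp only [adjMul, add_mul]
  abel

theorem eq_of_adjMul_eq_zero {a b c : R} (hab : adjMul a b = 0) (hbc : adjMul b c = 0) : a = c :=
  equiv.injective <|
    left_inv_eq_right_inv (adjMul_eq_zero_iff.mp hab) (adjMul_eq_zero_iff.mp hbc)

theorem exists_adjMul_inverse (hR : ∀ a : R, ∃ b : R, adjMul a b = 0) (a : R) :
    ∃ b : R, adjMul a b = 0 ∧ adjMul b a = 0 := by
  obtain ⟨b, hab⟩ := hR a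
  obtain ⟨c, hbc⟩ := hR b
  obtain rfl : a = c := eq_of_adjMul_eq_zero hab hbc
  exact ⟨b, hab, hbc⟩

end AdjointMultiplication

section RingMultiplication

open LeftBrace (circ cone cinv)

section LeftBrace

variable {B : Type*} [LeftBrace B]

theorem add_add_starB (a b : B) : a + b + starB a b = circ a b := by
  simp only [starB]
  abel

theorem cone_eq_zero : (cone : B) = 0 := by
  simpa only [LeftBrace.cone_circ, add_zero, zero_add] using
    LeftBrace.left_brace (cone : B) 0 0

theorem starB_add (a b c : B) : starB a (b + c) = starB a b + starB a c := by
  have circ_add : circ a (b + c) = circ a b + circ a c - a :=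
    eq_sub_of_add_eq (LeftBrace.left_brace a b c)
  simp only [starB, circ_add]
  abel

theorem add_add_starB_cinv (a : B) : a + cinv a + starB a (cinv a) = 0 := by
  rw [add_add_starB, LeftBrace.circ_cinv, cone_eq_zero]

end LeftBrace

variable {B : Type*} [TwoSidedBrace B]

theorem add_starB (a b c : B) : starB (a + b) c = starB a c + starB b c := by
  have add_circ : circ (a + b) c = circ a c + circ b c - c :=
    eq_sub_of_add_eq (TwoSidedBrace.right_brace a b c)
  simp only [starB, add_circ]
  abel

theorem starB_assoc (a b c : B) : starB (starB a b) c = starB a (starB b c) := by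
  let lowerTerms := a + b + c + starB a b + starB a c + starB b c
  have expand_left : circ (circ a b) c = lowerTerms + starB (starB a b) c := by
    simp only [lowerTerms, ← add_add_starB, add_starB]
    abel
  have expand_right : circ a (circ b c) = lowerTerms + starB a (starB b c) := by
    simp only [lowerTerms, ← add_add_starB, starB_add]
    abel
  apply add_left_cancel (a := lowerTerms)
  rw [← expand_left, ← expand_right, LeftBrace.circ_assoc]

end RingMultiplication

theorem stmt_5_general :
    (∀ (R : Type u) [NonUnitalRing R],
        (∀ a : R, ∃ b : R, a + b + a * b = 0) →
        ((∀ a b c : R, adjMul (adjMul a b) c = adjMul a (adjMul b c)) ∧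
         (∀ a : R, adjMul a 0 = a ∧ adjMul 0 a = a) ∧
         (∀ a : R, ∃ b : R, adjMul a b = 0 ∧ adjMul b a = 0) ∧
         (∀ a b c : R, adjMul a (b + c) + a = adjMul a b + adjMul a c) ∧
         (∀ a b c : R, adjMul (a + b) c + c = adjMul a c + adjMul b c))) ∧
    (∀ (B : Type v) [TwoSidedBrace B],
        (∀ a b c : B, starB (starB a b) c = starB a (starB b c)) ∧
        (∀ a b c : B, starB a (b + c) = starB a b + starB a c) ∧
        (∀ a b c : B, starB (a + b) c = starB a c + starB b c) ∧
        (∀ a : B, ∃ b : B, a + b + starB a b = 0)) :=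
  ⟨fun _ _ hR =>
    ⟨adjMul_assoc, fun a => ⟨adjMul_zero a, zero_adjMul a⟩, exists_adjMul_inverse hR,
      adjMul_add_add_left, add_adjMul_add_right⟩,
   fun _ _ =>
    ⟨starB_assoc, starB_add, add_starB, fun a => ⟨LeftBrace.cinv a, add_add_starB_cinv a⟩⟩⟩

/-- A Jacobson radical ring is a two-sided brace under the adjoint
multiplication; conversely, a two-sided brace is a Jacobson radical ring
under the ring multiplication. -/
theorem stmt_5 :
    (∀ (R : Type) [inst : NonUnitalRing R],
        (∀ a : R, ∃ b : R, a + b + a * b = 0) →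
        ((∀ a b c : R, adjMul (adjMul a b) c = adjMul a (adjMul b c)) ∧
         (∀ a : R, adjMul a 0 = a ∧ adjMul 0 a = a) ∧
         (∀ a : R, ∃ b : R, adjMul a b = 0 ∧ adjMul b a = 0) ∧
         (∀ a b c : R, adjMul a (b + c) + a = adjMul a b + adjMul a c) ∧
         (∀ a b c : R, adjMul (a + b) c + c = adjMul a c + adjMul b c))) ∧
    (∀ (B : Type) [inst : TwoSidedBrace B],
        (∀ a b c : B, starB (starB a b) c = starB a (starB b c)) ∧
        (∀ a b c : B, starB a (b + c) = starB a b + starB a c) ∧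
        (∀ a b c : B, starB (a + b) c = starB a c + starB b c) ∧
        (∀ a : B, ∃ b : B, a + b + starB a b = 0)) :=
  stmt_5_general
end

section
/- Let (X,·) be a cycle set and define R : X×X → X×X by R(x,y) = (x^y, x^y · y), where x^y = σ_y^{-1}(x). Then (X,R) is a left non-degenerate unitary set-theoretic solution of the quantum Yang–Baxter equation. -/
/-- The map `R(x,y) = (x^y, x^y · y)` associated to a cycle set whose left
multiplications are the bijections `σ x`, where `x^y = σ_y⁻¹(x)`. -/
def Rmap {X : Type*} (σ : X → X ≃ X) : X × X → X × X :=
  fun p => ((σ p.2).symm p.1, σ ((σ p.2).symm p.1) p.2)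

/-- `R₁₂` acting on the first two coordinates of `X³`. -/
def R12g {X : Type*} (Rm : X × X → X × X) : X × X × X → X × X × X :=
  fun t => ((Rm (t.1, t.2.1)).1, (Rm (t.1, t.2.1)).2, t.2.2)

/-- `R₁₃` acting on the first and third coordinates of `X³`. -/
def R13g {X : Type*} (Rm : X × X → X × X) : X × X × X → X × X × X :=
  fun t => ((Rm (t.1, t.2.2)).1, t.2.1, (Rm (t.1, t.2.2)).2)

/-- `R₂₃` acting on the last two coordinates of `X³`. -/
def R23g {X : Type*} (Rm : X × X → X × X) : X × X × X → X × X × X :=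
  fun t => (t.1, Rm t.2)

/-!
Write `x · y` for `σ x y`. The map `R` is determined by the formula `R (y · x, y) = (x, x · y)`.
Swapping the output gives the input with `x` and `y` exchanged, whence unitarity. For the
Yang–Baxter equation, every triple has the form `((z · b) · (z · a), z · b, z)`. Each composite is
evaluated on it by three uses of the formula for `R` and one of the cycle set identity, and the two
values agree by one more instance of that identity.
-/

/-- The cycle set condition `(x · y) · (x · z) = (y · x) · (y · z)` on the operation
`x · y = σ x y`. Bijectivity of the left multiplications is built into the type of `σ`. -/
def IsCycleSet {X : Type*} (σ : X → X ≃ X) : Prop :=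
  ∀ x y z : X, σ (σ x y) (σ x z) = σ (σ y x) (σ y z)

section

variable {X : Type*} (σ : X → X ≃ X)

theorem Rmap_leftMul (x y : X) : Rmap σ (σ y x, y) = (x, σ x y) := by
  simp only [Rmap, Equiv.symm_apply_apply]

theorem bijective_fst_Rmap (y : X) :
    Function.Bijective fun x : X => (Rmap σ (x, y)).1 :=
  (σ y).symm.bijective

theorem involutive_swap_comp_Rmap : Function.Involutive (Prod.swap ∘ Rmap σ) := by
  rintro ⟨x, y⟩
  obtain ⟨a, rfl⟩ := (σ y).surjective x
  simp only [Function.comp_apply, Rmap_leftMul, Prod.swap_prod_mk]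

theorem exists_triple_eq_leftMul (x y z : X) :
    ∃ a b : X, (x, y, z) = (σ (σ z b) (σ z a), σ z b, z) := by
  obtain ⟨b, rfl⟩ := (σ z).surjective y
  obtain ⟨c, rfl⟩ := (σ (σ z b)).surjective x
  obtain ⟨a, rfl⟩ := (σ z).surjective c
  exact ⟨a, b, rfl⟩

namespace IsCycleSet

variable {σ}

theorem R12g_R13g_R23g_apply (hσ : IsCycleSet σ) (a b z : X) :
    R12g (Rmap σ) (R13g (Rmap σ) (R23g (Rmap σ) (σ (σ z b) (σ z a), σ z b, z))) =
      (a, σ a b, σ (σ b a) (σ b z)) :=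
  calc
    _ = R12g (Rmap σ) (R13g (Rmap σ) (σ (σ z b) (σ z a), b, σ b z)) := by
      simp only [R23g, Rmap_leftMul]
    _ = R12g (Rmap σ) (R13g (Rmap σ) (σ (σ b z) (σ b a), b, σ b z)) := by
      rw [hσ z b a]
    _ = R12g (Rmap σ) (σ b a, b, σ (σ b a) (σ b z)) := by
      simp only [R13g, Rmap_leftMul]
    _ = (a, σ a b, σ (σ b a) (σ b z)) := by
      simp only [R12g, Rmap_leftMul]

theorem R23g_R13g_R12g_apply (hσ : IsCycleSet σ) (a b z : X) :
    R23g (Rmap σ) (R13g (Rmap σ) (R12g (Rmap σ) (σ (σ z b) (σ z a), σ z b, z))) =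
      (a, σ a b, σ (σ a b) (σ a z)) :=
  calc
    _ = R23g (Rmap σ) (R13g (Rmap σ) (σ z a, σ (σ z a) (σ z b), z)) := by
      simp only [R12g, Rmap_leftMul]
    _ = R23g (Rmap σ) (a, σ (σ z a) (σ z b), σ a z) := by
      simp only [R13g, Rmap_leftMul]
    _ = R23g (Rmap σ) (a, σ (σ a z) (σ a b), σ a z) := by
      rw [hσ z a b]
    _ = (a, σ a b, σ (σ a b) (σ a z)) := by
      simp only [R23g, Rmap_leftMul]

theorem yangBaxter_Rmap (hσ : IsCycleSet σ) :
    R12g (Rmap σ) ∘ R13g (Rmap σ) ∘ R23g (Rmap σ) =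
      R23g (Rmap σ) ∘ R13g (Rmap σ) ∘ R12g (Rmap σ) := by
  funext ⟨x, y, z⟩
  obtain ⟨a, b, hxyz⟩ := exists_triple_eq_leftMul σ x y z
  simp only [Function.comp_apply, hxyz]
  rw [hσ.R12g_R13g_R23g_apply, hσ.R23g_R13g_R12g_apply, hσ a b z]

end IsCycleSet

end

/-- A cycle set `(X,·)` (with bijective left multiplications `σ x` and
`(x·y)·(x·z) = (y·x)·(y·z)`) gives rise, via `R(x,y) = (x^y, x^y·y)`, to a
left non-degenerate unitary set-theoretic solution of the QYBE. -/
theorem stmt_6 {X : Type*} (σ : X → X ≃ X)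
    (hcyc : ∀ x y z : X, σ (σ x y) (σ x z) = σ (σ y x) (σ y z)) :
    R12g (Rmap σ) ∘ R13g (Rmap σ) ∘ R23g (Rmap σ) =
      R23g (Rmap σ) ∘ R13g (Rmap σ) ∘ R12g (Rmap σ) ∧
    (∀ y : X, Function.Bijective fun x : X => (Rmap σ (x, y)).1) ∧
    (Prod.swap ∘ Rmap σ) ∘ (Prod.swap ∘ Rmap σ) = (id : X × X → X × X) :=
  ⟨IsCycleSet.yangBaxter_Rmap hcyc, bijective_fst_Rmap σ, (involutive_swap_comp_Rmap σ).comp_self⟩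
end

section
/- Let (X,R) with R(x,y) = (x^y, ˣy) be a left non-degenerate unitary set-theoretic solution of the quantum Yang–Baxter equation. For each x ∈ X let σ_x : X → X be the inverse of the bijection z ↦ z^x, and define x·y := σ_x(y). Then (X,·) is a cycle set, and moreover ˣy = x^y · y for all x, y ∈ X. -/
/-- The map `R(x,y) = (x^y, ˣy)` built from the two families
`pow x y = x^y` and `act x y = ˣy`. -/
def Rof {X : Type*} (pow act : X → X → X) : X × X → X × X :=
  fun p => (pow p.1 p.2, act p.1 p.2)

/-!
Write `ρ_y` for the map `x ↦ x^y`, so that `σ_y` is its inverse. Unitarity gives `ˣy = x^y · y`.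
Substituting this into the first component of the Yang–Baxter equation at `(x, y · z, y)` turns it
into `ρ_z ∘ ρ_{z · y} = ρ_y ∘ ρ_{y · z}`, and inverting both sides yields the cycle identity.
-/

open Function

/-- A cycle set, encoded as a property of its operation `x · y = op x y`: all left multiplications
are bijective and `(x · y) · (x · z) = (y · x) · (y · z)`. -/
structure IsCycleSet_s7 {X : Type*} (op : X → X → X) : Prop where
  bijective_left : ∀ x, Bijective (op x)
  cycle_identity : ∀ x y z, op (op x y) (op x z) = op (op y x) (op y z)

section

variable {X : Type*} {pow act σ : X → X → X}

theorem IsCycleSet_s7.of_inverse_of_comm (hleft : ∀ y, LeftInverse (σ y) (pow · y))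
    (hright : ∀ y, RightInverse (σ y) (pow · y))
    (hcomm : ∀ x y z, pow (pow x (σ z y)) z = pow (pow x (σ y z)) y) : IsCycleSet_s7 σ where
  bijective_left x := ⟨(hright x).injective, (hleft x).surjective⟩
  cycle_identity x y z := by
    have left_inv : LeftInverse (σ (σ x y) ∘ σ x) fun w ↦ pow (pow w (σ x y)) x :=
      (hleft x).comp (hleft (σ x y))
    have right_inv : RightInverse (σ (σ y x) ∘ σ y) fun w ↦ pow (pow w (σ x y)) x := by
      simp only [hcomm _ y x]
      exact (hright y).comp (hright (σ y x))
    exact congrFun (left_inv.eq_rightInverse right_inv) z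

namespace Rof

theorem pow_act_pow_of_unitary
    (hunit : (Prod.swap ∘ Rof pow act) ∘ (Prod.swap ∘ Rof pow act) = id) (x y : X) :
    pow (act x y) (pow x y) = y :=
  congrArg Prod.snd (congrFun hunit (x, y))

theorem act_eq_of_unitary
    (hunit : (Prod.swap ∘ Rof pow act) ∘ (Prod.swap ∘ Rof pow act) = id)
    (hleft : ∀ y, LeftInverse (σ y) (pow · y)) (x y : X) :
    act x y = σ (pow x y) y :=
  calc
    act x y = σ (pow x y) (pow (act x y) (pow x y)) := (hleft (pow x y) (act x y)).symm
    _ = σ (pow x y) y := by rw [pow_act_pow_of_unitary hunit]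

theorem pow_pow_act_of_yangBaxter
    (hqybe : R12g (Rof pow act) ∘ R13g (Rof pow act) ∘ R23g (Rof pow act) =
      R23g (Rof pow act) ∘ R13g (Rof pow act) ∘ R12g (Rof pow act)) (x y z : X) :
    pow (pow x (act y z)) (pow y z) = pow (pow x y) z :=
  congrArg Prod.fst (congrFun hqybe (x, y, z))

theorem pow_pow_comm_of_yangBaxter
    (hqybe : R12g (Rof pow act) ∘ R13g (Rof pow act) ∘ R23g (Rof pow act) =
      R23g (Rof pow act) ∘ R13g (Rof pow act) ∘ R12g (Rof pow act))
    (hright : ∀ y, RightInverse (σ y) (pow · y))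
    (hact : ∀ x y, act x y = σ (pow x y) y) (x y z : X) :
    pow (pow x (σ z y)) z = pow (pow x (σ y z)) y := by
  have pow_σ : pow (σ y z) y = z := hright y z
  simpa only [hact, pow_σ] using pow_pow_act_of_yangBaxter hqybe x (σ y z) y

end Rof

end

/-- A left non-degenerate unitary solution `R(x,y) = (x^y, ˣy)` of the QYBE
yields a cycle set via `x·y := σ_x(y)`, where `σ_x` is the inverse of the
bijection `z ↦ z^x`; moreover `ˣy = x^y · y`. -/
theorem stmt_7 {X : Type*} (pow act : X → X → X)
    (hndg : ∀ y : X, Function.Bijective fun x : X => pow x y)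
    (hqybe : R12g (Rof pow act) ∘ R13g (Rof pow act) ∘ R23g (Rof pow act) =
      R23g (Rof pow act) ∘ R13g (Rof pow act) ∘ R12g (Rof pow act))
    (hunit : (Prod.swap ∘ Rof pow act) ∘ (Prod.swap ∘ Rof pow act) =
      (id : X × X → X × X))
    (σ : X → X → X)
    (hσ : ∀ x y : X, pow (σ x y) x = y ∧ σ x (pow y x) = y) :
    (∀ x : X, Function.Bijective (σ x)) ∧
    (∀ x y z : X, σ (σ x y) (σ x z) = σ (σ y x) (σ y z)) ∧
    (∀ x y : X, act x y = σ (pow x y) y) := by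
  have hleft : ∀ y, LeftInverse (σ y) (pow · y) := fun y x ↦ (hσ y x).2
  have hright : ∀ y, RightInverse (σ y) (pow · y) := fun y x ↦ (hσ y x).1
  have hact : ∀ x y, act x y = σ (pow x y) y := Rof.act_eq_of_unitary hunit hleft
  have hcycle : IsCycleSet_s7 σ :=
    .of_inverse_of_comm hleft hright (Rof.pow_pow_comm_of_yangBaxter hqybe hright hact)
  exact ⟨hcycle.bijective_left, hcycle.cycle_identity, hact⟩
end

section
/- Let (X,·) be a cycle set with x^y = σ_y^{-1}(x) and associated map R(x,y) = (x^y, x^y·y). The following are equivalent: (1) X is a non-degenerate cycle set, i.e., the map x ↦ x·x is a bijection; (2) (X,R) is a non-degenerate solution of the QYBE, i.e., for each x the map y ↦ x^y·y is a bijection of X; (3) there exists a binary operation ⊙ on X dual to ·, i.e., satisfying (x·y) ⊙ (y·x) = x and (x⊙y) · (y⊙x) = x for all x, y ∈ X. -/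
/-!
Write `T x = x·x` and `P (x, y) = (x·y, y·x)`. Each of the three conditions says that `P` is
bijective.

* `P` commutes with the swap of coordinates, hence so does an inverse of `P`; an inverse is
  therefore again of the form `(x, y) ↦ (x ⊙ y, y ⊙ x)`, and `⊙` is precisely a dual operation.
* In the coordinates `(a, x) = (x·y, x)`, the map `P` becomes `(a, x) ↦ (a, a^x·x)`, which is
  bijective if and only if it is bijective on every fibre `{a} × X`.
* `T` is the restriction of `P` to the diagonal, the set of fixed points of the swap, so it is
  bijective when `P` is. Conversely, the cycle identity with `z = y` reads `T (x·y) = (y·x)·T y`,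
  so `(T × id) ∘ P` is `id × T` composed with bijections.
-/

open Function

section CrossMap

variable {X : Type*}

/-- The map `(x, y) ↦ (x·y, y·x)` attached to a binary operation on `X`; its bijectivity is the
condition through which the different notions of non-degeneracy are compared. -/
def crossMap (f : X → X → X) (p : X × X) : X × X :=
  (f p.1 p.2, f p.2 p.1)

/-- `g` is a dual operation of `f`: `(x·y) ⊙ (y·x) = x` and `(x ⊙ y)·(y ⊙ x) = x`, where `f` is `·`
and `g` is `⊙`. -/
def IsDualOperation (f g : X → X → X) : Prop :=
  ∀ x y, g (f x y) (f y x) = x ∧ f (g x y) (g y x) = x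

theorem crossMap_commute_swap (f : X → X → X) : Function.Commute (crossMap f) Prod.swap :=
  fun _ ↦ rfl

theorem eq_crossMap_of_commute_swap {G : X × X → X × X} (hG : Function.Commute G Prod.swap) :
    G = crossMap fun x y ↦ (G (x, y)).1 :=
  funext fun p ↦ Prod.ext rfl (congrArg Prod.fst (hG p)).symm

theorem isDualOperation_iff_inverse_crossMap {f g : X → X → X} :
    IsDualOperation f g ↔
      LeftInverse (crossMap g) (crossMap f) ∧ RightInverse (crossMap g) (crossMap f) := by
  constructor
  · intro h
    exact ⟨fun p ↦ Prod.ext (h p.1 p.2).1 (h p.2 p.1).1,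
      fun p ↦ Prod.ext (h p.1 p.2).2 (h p.2 p.1).2⟩
  · rintro ⟨hleft, hright⟩ x y
    exact ⟨congrArg Prod.fst (hleft (x, y)), congrArg Prod.fst (hright (x, y))⟩

theorem bijective_crossMap_iff_exists_isDualOperation {f : X → X → X} :
    Bijective (crossMap f) ↔ ∃ g, IsDualOperation f g := by
  simp only [isDualOperation_iff_inverse_crossMap]
  refine bijective_iff_has_inverse.trans ⟨?_, fun ⟨g, hg⟩ ↦ ⟨crossMap g, hg⟩⟩
  rintro ⟨G, hleft, hright⟩
  have hG : Function.Commute G Prod.swap := (crossMap_commute_swap f).inverse_left hleft hright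
  rw [eq_crossMap_of_commute_swap hG] at hleft hright
  exact ⟨_, hleft, hright⟩

theorem bijective_diagonal_of_bijective_crossMap {f : X → X → X} (h : Bijective (crossMap f)) :
    Bijective fun x ↦ f x x := by
  constructor
  · intro x y hxy
    have hdiag : crossMap f (x, x) = crossMap f (y, y) := Prod.ext hxy hxy
    exact congrArg Prod.fst (h.injective hdiag)
  · intro a
    obtain ⟨p, hp⟩ := h.surjective (a, a)
    have hswap : p.swap = p :=
      h.injective <| by rw [crossMap_commute_swap f p, hp, Prod.swap_prod_mk]
    have hp_diag : p.2 = p.1 := congrArg Prod.fst hswap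
    refine ⟨p.1, ?_⟩
    simpa only [crossMap, hp_diag] using congrArg Prod.fst hp

end CrossMap

theorem bijective_prodMk_fst_iff {α β γ : Type*} {f : α → β → γ} :
    Bijective (fun p : α × β ↦ (p.1, f p.1 p.2)) ↔ ∀ a, Bijective (f a) := by
  constructor
  · intro h a
    constructor
    · intro b b' hb
      exact congrArg Prod.snd (h.injective (a₁ := (a, b)) (a₂ := (a, b')) (Prod.ext rfl hb))
    · intro c
      obtain ⟨⟨a', b⟩, hab⟩ := h.surjective (a, c)
      obtain ⟨rfl, hb⟩ := Prod.mk.inj hab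
      exact ⟨b, hb⟩
  · intro h
    exact (Equiv.prodShear (Equiv.refl α) fun a ↦ Equiv.ofBijective (f a) (h a)).bijective

/-- The change of coordinates `(x, y) ↦ (x·y, x)` given by a family of invertible left
multiplications. -/
def leftMulShear {α β γ : Type*} (σ : α → β ≃ γ) : α × β ≃ γ × α :=
  (Equiv.prodShear (Equiv.refl α) σ).trans (Equiv.prodComm α γ)

section LeftMul

variable {X : Type*} {σ : X → X ≃ X}

theorem bijective_crossMap_iff_forall_bijective :
    Bijective (crossMap fun x y ↦ σ x y) ↔ ∀ x, Bijective fun y ↦ σ ((σ y).symm x) y := by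
  have hfactor : crossMap (fun x y ↦ σ x y) =
      (fun p ↦ (p.1, σ ((σ p.2).symm p.1) p.2)) ∘ leftMulShear σ :=
    funext fun p ↦ by simp [crossMap, leftMulShear]
  rw [hfactor, Bijective.of_comp_iff _ (leftMulShear σ).bijective]
  exact bijective_prodMk_fst_iff (f := fun x y ↦ σ ((σ y).symm x) y)

theorem bijective_crossMap_of_bijective_diagonal
    (hσ : ∀ x y, σ (σ x y) (σ x y) = σ (σ y x) (σ y y)) (hdiag : Bijective fun x ↦ σ x x) :
    Bijective (crossMap fun x y ↦ σ x y) := by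
  have hfactor : Prod.map (fun x ↦ σ x x) id ∘ crossMap (fun x y ↦ σ x y) =
      leftMulShear σ ∘ Prod.map id (fun x ↦ σ x x) ∘ leftMulShear σ ∘ Prod.swap :=
    funext fun p ↦ Prod.ext (hσ p.1 p.2) rfl
  rw [← Bijective.of_comp_iff' (hdiag.prodMap bijective_id), hfactor]
  exact (leftMulShear σ).bijective.comp <| (bijective_id.prodMap hdiag).comp <|
    (leftMulShear σ).bijective.comp Prod.swap_bijective

theorem bijective_diagonal_iff_bijective_crossMap
    (hσ : ∀ x y, σ (σ x y) (σ x y) = σ (σ y x) (σ y y)) :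
    Bijective (fun x ↦ σ x x) ↔ Bijective (crossMap fun x y ↦ σ x y) :=
  ⟨bijective_crossMap_of_bijective_diagonal hσ, bijective_diagonal_of_bijective_crossMap⟩

end LeftMul

theorem stmt_9_general {X : Type*} (σ : X → X ≃ X)
    (hσ : ∀ x y : X, σ (σ x y) (σ x y) = σ (σ y x) (σ y y)) :
    (Bijective (fun x : X ↦ σ x x) ↔ ∀ x : X, Bijective fun y : X ↦ σ ((σ y).symm x) y) ∧
    (Bijective (fun x : X ↦ σ x x) ↔
      ∃ od : X → X → X, ∀ x y : X,
        od (σ x y) (σ y x) = x ∧ σ (od x y) (od y x) = x) := by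
  have hcross := bijective_diagonal_iff_bijective_crossMap hσ
  exact ⟨hcross.trans bijective_crossMap_iff_forall_bijective,
    hcross.trans bijective_crossMap_iff_exists_isDualOperation⟩

/-- For a cycle set `(X,·)` with left multiplications `σ x` and
`x^y = σ_y⁻¹(x)`, the following are equivalent:
(1) `x ↦ x·x` is a bijection (the cycle set is non-degenerate);
(2) for each `x`, the map `y ↦ ˣy = x^y·y` is a bijection (the associated
QYBE solution is non-degenerate);
(3) there exists a dual operation `⊙` with `(x·y) ⊙ (y·x) = x` and
`(x⊙y) · (y⊙x) = x`. -/
theorem stmt_9 {X : Type*} (σ : X → X ≃ X)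
    (hcyc : ∀ x y z : X, σ (σ x y) (σ x z) = σ (σ y x) (σ y z)) :
    (Function.Bijective (fun x : X => σ x x) ↔
      ∀ x : X, Function.Bijective fun y : X => σ ((σ y).symm x) y) ∧
    (Function.Bijective (fun x : X => σ x x) ↔
      ∃ od : X → X → X, ∀ x y : X,
        od (σ x y) (σ y x) = x ∧ σ (od x y) (od y x) = x) :=
  stmt_9_general σ fun x y ↦ hcyc x y y
end

section
/- Let (X,·) be a non-degenerate cycle set and let ⊙ be a dual operation to ·, i.e., (x·y) ⊙ (y·x) = x and (x⊙y) · (y⊙x) = x for all x, y ∈ X. Then (X,⊙) is itself a non-degenerate cycle set: every left multiplication x ⊙ − is a bijection, (x⊙y)⊙(x⊙z) = (y⊙x)⊙(y⊙z) for all x, y, z, and the map x ↦ x⊙x is a bijection. -/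
/-!
The triples `(x, y, z)` for which the cycle law of `⊙` has to be checked are parametrized by triples
`(u, v, w)` through `x = (u · v) · (u · w)`, `y = (u · w) · (u · v)`, `z = (v · w) · (v · u)`.
The cycle law of `·` makes swapping `v` and `w` the same as swapping `x` and `y`, and duality
turns `(x ⊙ y) ⊙ (x ⊙ z)` into `u`, which the swap leaves alone.
-/

open Function

section CycleSet

variable {X : Type*} {op od : X → X → X}

/-- The identity `(x · y) · (x · z) = (y · x) · (y · z)` defining cycle sets among the binary
operations with bijective left multiplications. Bijectivity is kept separate. -/
def CycleLaw (op : X → X → X) : Prop :=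
  ∀ x y z, op (op x y) (op x z) = op (op y x) (op y z)

/-- The operation `od` is dual to `op`: the maps `(x, y) ↦ (x · y, y · x)` of `X × X` attached to
`op` and `od` are mutually inverse. Only first components are recorded; exchanging `x` and `y` gives
the second ones. -/
structure IsDualOp (op od : X → X → X) : Prop where
  dual_op : ∀ x y, od (op x y) (op y x) = x
  op_dual : ∀ x y, op (od x y) (od y x) = x

namespace IsDualOp

theorem dual_injective (h : IsDualOp op od) (hop : ∀ x, Injective (op x)) (x : X) :
    Injective (od x) := by
  intro y z hyz
  have hswap : od y x = od z x := hop (od x y) <| by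
    rw [h.op_dual, hyz, h.op_dual]
  rw [← h.op_dual y x, hswap, hyz, h.op_dual]

theorem dual_surjective (h : IsDualOp op od) (hop : ∀ x, Surjective (op x)) (x : X) :
    Surjective (od x) := by
  intro y
  obtain ⟨z, rfl⟩ := hop y x
  exact ⟨op z y, h.dual_op y z⟩

theorem dual_bijective (h : IsDualOp op od) (hop : ∀ x, Bijective (op x)) (x : X) :
    Bijective (od x) :=
  ⟨h.dual_injective (fun y => (hop y).injective) x,
    h.dual_surjective (fun y => (hop y).surjective) x⟩

theorem dual_self_bijective (h : IsDualOp op od) : Bijective fun x => od x x :=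
  bijective_iff_has_inverse.mpr
    ⟨fun x => op x x, fun x => h.op_dual x x, fun x => h.dual_op x x⟩

theorem dual_dual_eq (h : IsDualOp op od) (hcyc : CycleLaw op) {u v w x y z : X}
    (hx : op (op u v) (op u w) = x) (hy : op (op u w) (op u v) = y)
    (hz : op (op v w) (op v u) = z) :
    od (od x y) (od x z) = u := by
  have hxy : od x y = op u v := by rw [← hx, ← hy, h.dual_op]
  have hxz : od x z = op v u := by rw [← hx, ← hz, hcyc u v w, h.dual_op]
  rw [hxy, hxz, h.dual_op]

theorem exists_op_op_eq (h : IsDualOp op od) (hcyc : CycleLaw op)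
    (hop : ∀ x, Bijective (op x)) (x y z : X) :
    ∃ u v w, op (op u v) (op u w) = x ∧ op (op u w) (op u v) = y ∧
      op (op v w) (op v u) = z := by
  let u := od (od x y) (od x z)
  let v := od (od x z) (od x y)
  have huv : op u v = od x y := h.op_dual _ _
  have hvu : op v u = od x z := h.op_dual _ _
  obtain ⟨w, huw⟩ := (hop u).surjective (od y x)
  have hx : op (op u v) (op u w) = x := by rw [huv, huw, h.op_dual]
  have hvw : op v w = od z x := (hop (od x z)).injective <|
    calc op (od x z) (op v w) = op (op u v) (op u w) := by rw [← hvu, hcyc u v w]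
      _ = x := hx
      _ = op (od x z) (od z x) := (h.op_dual x z).symm
  exact ⟨u, v, w, hx, by rw [huw, huv, h.op_dual], by rw [hvw, hvu, h.op_dual]⟩

theorem dual_cycleLaw (h : IsDualOp op od) (hcyc : CycleLaw op)
    (hop : ∀ x, Bijective (op x)) : CycleLaw od := by
  intro x y z
  obtain ⟨u, v, w, hx, hy, hz⟩ := h.exists_op_op_eq hcyc hop x y z
  have hz' : op (op w v) (op w u) = z := by rw [← hcyc v w u, hz]
  rw [h.dual_dual_eq hcyc hx hy hz, h.dual_dual_eq hcyc hy hx hz']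

end IsDualOp

end CycleSet

/-- If `(X,·)` is a non-degenerate cycle set (left multiplications `σ x`
bijective, cycle identity, and `x ↦ x·x` bijective) and `⊙` is a dual
operation to `·`, then `(X,⊙)` is itself a non-degenerate cycle set. -/
theorem stmt_10 {X : Type*} (σ : X → X ≃ X)
    (hcyc : ∀ x y z : X, σ (σ x y) (σ x z) = σ (σ y x) (σ y z))
    (hnd : Function.Bijective (fun x : X => σ x x))
    (od : X → X → X)
    (hdual : ∀ x y : X, od (σ x y) (σ y x) = x ∧ σ (od x y) (od y x) = x) :
    (∀ x : X, Function.Bijective (od x)) ∧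
    (∀ x y z : X, od (od x y) (od x z) = od (od y x) (od y z)) ∧
    Function.Bijective (fun x : X => od x x) := by
  have hσ : ∀ x, Bijective (σ x) := fun x => (σ x).bijective
  have hdualOp : IsDualOp (fun x => σ x) od :=
    ⟨fun x y => (hdual x y).1, fun x y => (hdual x y).2⟩
  exact ⟨hdualOp.dual_bijective hσ, hdualOp.dual_cycleLaw hcyc hσ, hdualOp.dual_self_bijective⟩
end

section
/- Let (G,X) be a cycle group: G a group acting on a set X equipped with a map + : G×X → G satisfying (πρ) + x = (π + ρ(x))ρ and (π + x) + y = (π + y) + x for all π, ρ ∈ G and x, y ∈ X. Then the binary operation x·y := (1 + x)(y), where 1 ∈ G is the identity element, makes X into a cycle set. -/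
/-- A cycle set: a binary operation, written `x · y` on paper, whose left multiplications are
bijective and which satisfies the cycloid equation. -/
structure IsCycleSet_s11 {X : Type*} (op : X → X → X) : Prop where
  bijective (x : X) : Function.Bijective (op x)
  cycloid (x y z : X) : op (op x y) (op x z) = op (op y x) (op y z)

/-- The axioms on the map `+ : G × X → G` of a cycle group `(G, X)`. Here `add π x` stands for
`π + x`. The group and action axioms are kept out of the structure and are supplied by instances
on `G` and `X`. -/
structure IsCycleGroup {G X : Type*} [Mul G] [SMul G X] (add : G → X → G) : Prop where
  add_mul (π ρ : G) (x : X) : add (π * ρ) x = add π (ρ • x) * ρ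
  add_right_comm (π : G) (x y : X) : add (add π x) y = add (add π y) x

namespace IsCycleGroup

theorem add_one_smul_mul {M X : Type*} [MulOneClass M] [SMul M X] {add : M → X → M}
    (h : IsCycleGroup add) (ρ : M) (x : X) : add 1 (ρ • x) * ρ = add ρ x := by
  rw [← h.add_mul, one_mul]

theorem add_one_smul_mul_add_one_comm {M X : Type*} [MulOneClass M] [SMul M X]
    {add : M → X → M} (h : IsCycleGroup add) (x y : X) :
    add 1 (add 1 x • y) * add 1 x = add 1 (add 1 y • x) * add 1 y :=
  calc
    add 1 (add 1 x • y) * add 1 x = add (add 1 x) y := h.add_one_smul_mul _ _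
    _ = add (add 1 y) x := h.add_right_comm 1 x y
    _ = add 1 (add 1 y • x) * add 1 y := (h.add_one_smul_mul _ _).symm

theorem cycloid {M X : Type*} [Monoid M] [MulAction M X] {add : M → X → M}
    (h : IsCycleGroup add) (x y z : X) :
    add 1 (add 1 x • y) • (add 1 x • z) = add 1 (add 1 y • x) • (add 1 y • z) := by
  rw [← mul_smul, ← mul_smul, h.add_one_smul_mul_add_one_comm]

theorem isCycleSet {G X : Type*} [Group G] [MulAction G X] {add : G → X → G}
    (h : IsCycleGroup add) : IsCycleSet_s11 fun x y : X => add 1 x • y where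
  bijective x := MulAction.bijective (add 1 x)
  cycloid := h.cycloid

end IsCycleGroup

/-- If `(G,X)` is a cycle group — a group `G` acting on a set `X` with a map
`+ : G × X → G` satisfying `(πρ) + x = (π + ρ(x))ρ` and
`(π + x) + y = (π + y) + x` — then `x·y := (1 + x)(y)` makes `X` a cycle set:
the left multiplications are bijective and
`(x·y)·(x·z) = (y·x)·(y·z)` holds. -/
theorem stmt_11 {G X : Type*} [Group G] [MulAction G X]
    (add : G → X → G)
    (h1 : ∀ (π ρ : G) (x : X), add (π * ρ) x = add π (ρ • x) * ρ)
    (h2 : ∀ (π : G) (x y : X), add (add π x) y = add (add π y) x) :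
    (∀ x : X, Function.Bijective fun y : X => add 1 x • y) ∧
    (∀ x y z : X,
      add 1 (add 1 x • y) • (add 1 x • z) =
        add 1 (add 1 y • x) • (add 1 y • z)) := by
  have h : IsCycleGroup add := ⟨h1, h2⟩
  exact ⟨h.isCycleSet.bijective, h.isCycleSet.cycloid⟩
end

section
/- Let A be a linear cycle set. Then A is non-degenerate: the map a ↦ (−a)·a is a two-sided inverse of the map a ↦ a·a. Moreover, for every a ∈ A the left multiplication σ_a satisfies σ_a^{-1} = σ_{−(a·a)}, and the map σ : A → G(A), a ↦ σ_a, is surjective onto the permutation group G(A) (the subgroup of Sym(A) generated by all σ_a): every element of G(A) equals σ_b for some b ∈ A. -/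
/-!
As an identity of permutations, the law `(a + b)·c = (a·b)·(a·c)` reads `σ_{a+b} = σ_{a·b} σ_a`.
Taking `b = -a`, and using `a·(-a) = -(a·a)`, gives `σ_a⁻¹ = σ_{-(a·a)}`; taking
`b = σ_a⁻¹(c)` gives `σ_c σ_a = σ_{a+b}`. Hence the `σ_a` already form a group.
-/

/-- The linear cycle set laws for an operation `a·b = σ a b` on an additive group which need not be
commutative. The law `(a + b)·c = (a·b)·(a·c)` is encoded as an identity of permutations. -/
structure IsSkewLinearCycleSet {A : Type*} [AddGroup A] (σ : A → Equiv.Perm A) : Prop where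
  apply_add : ∀ a b c, σ a (b + c) = σ a b + σ a c
  map_add : ∀ a b, σ (a + b) = σ (σ a b) * σ a

namespace IsSkewLinearCycleSet

variable {A : Type*} [AddGroup A] {σ : A → Equiv.Perm A}

theorem apply_zero (h : IsSkewLinearCycleSet σ) (a : A) : σ a 0 = 0 :=
  (AddMonoidHom.mk' (σ a) (h.apply_add a)).map_zero

theorem apply_neg (h : IsSkewLinearCycleSet σ) (a b : A) : σ a (-b) = -σ a b :=
  (AddMonoidHom.mk' (σ a) (h.apply_add a)).map_neg b

theorem map_zero (h : IsSkewLinearCycleSet σ) : σ 0 = 1 := by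
  have idempotent : σ 0 = σ 0 * σ 0 := by
    simpa only [add_zero, h.apply_zero] using h.map_add 0 0
  exact left_eq_mul.mp idempotent

theorem map_neg_apply_self (h : IsSkewLinearCycleSet σ) (a : A) : σ (-σ a a) = (σ a)⁻¹ :=
  eq_inv_of_mul_eq_one_left <| by
    rw [← h.apply_neg, ← h.map_add, add_neg_cancel, h.map_zero]

theorem map_add_symm_apply (h : IsSkewLinearCycleSet σ) (a b : A) :
    σ (b + (σ b).symm a) = σ a * σ b := by
  rw [h.map_add, Equiv.apply_symm_apply]

theorem leftInverse_neg_apply_self (h : IsSkewLinearCycleSet σ) :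
    Function.LeftInverse (fun a ↦ σ (-a) a) (fun a ↦ σ a a) := fun a ↦ by
  simp only [h.map_neg_apply_self, Equiv.Perm.coe_inv, Equiv.symm_apply_apply]

theorem rightInverse_neg_apply_self (h : IsSkewLinearCycleSet σ) :
    Function.RightInverse (fun a ↦ σ (-a) a) (fun a ↦ σ a a) := fun a ↦
  calc
    σ (σ (-a) a) (σ (-a) a) = σ (-a + a) a := by rw [h.map_add, Equiv.Perm.mul_apply]
    _ = a := by rw [neg_add_cancel, h.map_zero, Equiv.Perm.one_apply]

/-- The left multiplications, as a subgroup of `Sym(A)`; it is the permutation group `G(A)`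
by `closure_range`. -/
def rangeSubgroup (h : IsSkewLinearCycleSet σ) : Subgroup (Equiv.Perm A) where
  carrier := Set.range σ
  one_mem' := ⟨0, h.map_zero⟩
  mul_mem' := by
    rintro _ _ ⟨a, rfl⟩ ⟨b, rfl⟩
    exact ⟨b + (σ b).symm a, h.map_add_symm_apply a b⟩
  inv_mem' := by
    rintro _ ⟨a, rfl⟩
    exact ⟨-σ a a, h.map_neg_apply_self a⟩

theorem closure_range (h : IsSkewLinearCycleSet σ) :
    Subgroup.closure (Set.range σ) = h.rangeSubgroup :=
  Subgroup.closure_eq h.rangeSubgroup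

theorem mem_closure_range (h : IsSkewLinearCycleSet σ) {π : Equiv.Perm A} :
    π ∈ Subgroup.closure (Set.range σ) ↔ ∃ a, π = σ a := by
  rw [h.closure_range]
  exact exists_congr fun _ ↦ eq_comm

end IsSkewLinearCycleSet

theorem stmt_12_general {A : Type*} [AddGroup A] {σ : A → Equiv.Perm A}
    (h : IsSkewLinearCycleSet σ) :
    (∀ a : A, σ (-(σ a a)) (σ a a) = a) ∧
    (∀ a : A, σ (σ (-a) a) (σ (-a) a) = a) ∧
    (∀ a b : A, σ (-(σ a a)) (σ a b) = b ∧ σ a (σ (-(σ a a)) b) = b) ∧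
    (∀ π : Equiv.Perm A, π ∈ Subgroup.closure (Set.range σ) → ∃ b : A, π = σ b) := by
  refine ⟨h.leftInverse_neg_apply_self, h.rightInverse_neg_apply_self, fun a b ↦ ?_,
    fun _ ↦ h.mem_closure_range.mp⟩
  rw [h.map_neg_apply_self, Equiv.Perm.coe_inv]
  exact ⟨(σ a).symm_apply_apply b, (σ a).apply_symm_apply b⟩

/-- Let `A` be a linear cycle set (an abelian group with cycle set operation
`a·b = σ a b` satisfying `a·(b+c) = a·b + a·c` and `(a+b)·c = (a·b)·(a·c)`).
Then `A` is non-degenerate: `a ↦ (−a)·a` is a two-sided inverse of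
`a ↦ a·a`; moreover `σ_a⁻¹ = σ_{−(a·a)}` for every `a`, and every element of
the permutation group `G(A)` (the subgroup of `Sym(A)` generated by the
`σ_a`) is of the form `σ_b`. -/
theorem stmt_12 {A : Type*} [AddCommGroup A] (σ : A → A ≃ A)
    (hcyc : ∀ a b c : A, σ (σ a b) (σ a c) = σ (σ b a) (σ b c))
    (hl : ∀ a b c : A, σ a (b + c) = σ a b + σ a c)
    (hr : ∀ a b c : A, σ (a + b) c = σ (σ a b) (σ a c)) :
    (∀ a : A, σ (-(σ a a)) (σ a a) = a) ∧
    (∀ a : A, σ (σ (-a) a) (σ (-a) a) = a) ∧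
    (∀ a b : A, σ (-(σ a a)) (σ a b) = b ∧ σ a (σ (-(σ a a)) b) = b) ∧
    (∀ π : Equiv.Perm A,
      π ∈ Subgroup.closure (Set.range fun a : A => (σ a : Equiv.Perm A)) →
        ∃ b : A, π = σ b) :=
  stmt_12_general ⟨hl, fun a b ↦ Equiv.ext (hr a b)⟩
end

section
/- Let X be a cycle set and define x ~ y iff σ_x = σ_y (equality of left multiplications). Then ~ is a congruence relation for the cycle set operation: if σ_x = σ_{x'} and σ_y = σ_{y'}, then σ_{x·y} = σ_{x'·y'}. -/
/-!
The cycle law says `σ (x · y) ∘ σ x = σ (y · x) ∘ σ y`. The right-hand side depends on `y` only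
through `σ y`, and surjectivity of `σ x` lets one cancel it on the left-hand side.
-/

section LeftMultiplication

variable {X : Type*} {σ : X → X → X} {x x' y y' : X}

theorem leftMul_congr_right (hcyc : ∀ x y z : X, σ (σ x y) (σ x z) = σ (σ y x) (σ y z))
    (hsurj : Function.Surjective (σ x)) (hy : σ y = σ y') :
    σ (σ x y) = σ (σ x y') := by
  have hcomp : σ (σ x y) ∘ σ x = σ (σ x y') ∘ σ x :=
    calc
      σ (σ x y) ∘ σ x = σ (σ y x) ∘ σ y := funext (hcyc x y)
      _ = σ (σ y' x) ∘ σ y' := by rw [hy]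
      _ = σ (σ x y') ∘ σ x := (funext (hcyc x y')).symm
  exact hsurj.injective_comp_right hcomp

theorem stmt_13_general (hcyc : ∀ x y z : X, σ (σ x y) (σ x z) = σ (σ y x) (σ y z))
    (hsurj : Function.Surjective (σ x)) (hx : σ x = σ x') (hy : σ y = σ y') :
    σ (σ x y) = σ (σ x' y') :=
  calc
    σ (σ x y) = σ (σ x y') := leftMul_congr_right hcyc hsurj hy
    _ = σ (σ x' y') := by rw [hx]

end LeftMultiplication

/-- In a cycle set `(X,·)` with left multiplications `σ x`, the relation
`x ~ y ↔ σ_x = σ_y` is a congruence: if `σ_x = σ_{x'}` and `σ_y = σ_{y'}`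
then `σ_{x·y} = σ_{x'·y'}`. -/
theorem stmt_13 {X : Type*} (σ : X → X ≃ X)
    (hcyc : ∀ x y z : X, σ (σ x y) (σ x z) = σ (σ y x) (σ y z))
    (x x' y y' : X) (hx : σ x = σ x') (hy : σ y = σ y') :
    σ (σ x y) = σ (σ x' y') :=
  DFunLike.coe_injective <| stmt_13_general (σ := fun a ↦ ⇑(σ a)) hcyc (σ x).surjective
    (congrArg DFunLike.coe hx) (congrArg DFunLike.coe hy)
end

section
/- Every finite cycle set is non-degenerate: if (X,·) is a cycle set and X is a finite set, then the map x ↦ x·x is a bijection of X. -/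
/-!
The left multiplications of a cycle set extend from points to multisets of points. On the multiset
`m • x` the extension is the permutation `τ m x` (`nsmulPerm σ m x`) given by `τ 0 x = 1` and
`τ (m + 1) x = σ (τ m x x) * τ m x`, and the cycle identity upgrades to
`τ m (σ x y) * σ x = σ (τ m y x) * τ m y`.

If the `σ x` generate a finite group, then by pigeonhole `τ k z = 1` for some `k > 0` and some `z`
of the form `τ i x x`. The upgraded identity shows that left multiplications preserve the equation
`τ k · = 1`, and since they have finite order they also reflect it; hence `τ k x = 1`. Writing
`k = m + 1`, any `y` with `σ y y = x` also satisfies `τ (m + 1) y = 1`, and the identity at `(y, y)`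
gives `y = τ m x x`. Conversely `y = τ m x x` is a solution, because `σ y y = τ (m + 1) x x = x`.
-/

namespace CycleSet

variable {X : Type*} {σ : X → Equiv.Perm X}

/-- The cycle identity `(x·y)·(x·z) = (y·x)·(y·z)` for the operation `x·y = σ x y`. Bijectivity of
the left multiplications is built into the type of `σ`. -/
def CycleIdentity (σ : X → Equiv.Perm X) : Prop :=
  ∀ x y z : X, σ (σ x y) (σ x z) = σ (σ y x) (σ y z)

/-- The permutation group of a cycle set, generated by its left multiplications. -/
abbrev permutationGroup (σ : X → Equiv.Perm X) : Subgroup (Equiv.Perm X) :=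
  Subgroup.closure (Set.range σ)

/-- The permutation by which the multiset `m • x`, consisting of `m` copies of the point `x`, acts
when the left multiplications of a cycle set are extended to finite multisets. -/
def nsmulPerm (σ : X → Equiv.Perm X) : ℕ → X → Equiv.Perm X
  | 0, _ => 1
  | m + 1, x => σ (nsmulPerm σ m x x) * nsmulPerm σ m x

@[simp]
theorem nsmulPerm_zero (x : X) : nsmulPerm σ 0 x = 1 := rfl

theorem nsmulPerm_succ (m : ℕ) (x : X) :
    nsmulPerm σ (m + 1) x = σ (nsmulPerm σ m x x) * nsmulPerm σ m x := rfl

theorem nsmulPerm_add (i j : ℕ) (x : X) :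
    nsmulPerm σ (i + j) x = nsmulPerm σ j (nsmulPerm σ i x x) * nsmulPerm σ i x := by
  induction j with
  | zero => simp
  | succ j ih =>
    rw [← add_assoc, nsmulPerm_succ, ih, nsmulPerm_succ, Equiv.Perm.mul_apply, mul_assoc]

theorem nsmulPerm_mem_permutationGroup (m : ℕ) (x : X) :
    nsmulPerm σ m x ∈ permutationGroup σ := by
  induction m with
  | zero => exact one_mem _
  | succ m ih => exact mul_mem (Subgroup.subset_closure (Set.mem_range_self _)) ih

theorem CycleIdentity.nsmulPerm_apply_mul (hσ : CycleIdentity σ) (m : ℕ) (x y : X) :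
    nsmulPerm σ m (σ x y) * σ x = σ (nsmulPerm σ m y x) * nsmulPerm σ m y := by
  induction m with
  | zero => simp
  | succ m ih =>
    have hpoint (z : X) :
        nsmulPerm σ m (σ x y) (σ x z) = σ (nsmulPerm σ m y x) (nsmulPerm σ m y z) :=
      Equiv.congr_fun ih z
    ext z
    simp only [nsmulPerm_succ, Equiv.Perm.mul_apply, hpoint]
    exact hσ _ _ _

theorem CycleIdentity.nsmulPerm_apply_eq_one (hσ : CycleIdentity σ) {k : ℕ} {y : X}
    (hy : nsmulPerm σ k y = 1) (x : X) : nsmulPerm σ k (σ x y) = 1 := by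
  simpa [hy] using hσ.nsmulPerm_apply_mul k x y

theorem CycleIdentity.nsmulPerm_apply_eq_one_iff (hσ : CycleIdentity σ) {x : X}
    (hx : IsOfFinOrder (σ x)) (k : ℕ) (y : X) :
    nsmulPerm σ k (σ x y) = 1 ↔ nsmulPerm σ k y = 1 := by
  refine ⟨fun h ↦ ?_, fun h ↦ hσ.nsmulPerm_apply_eq_one h x⟩
  have hpow (n : ℕ) : nsmulPerm σ k ((σ x ^ n) (σ x y)) = 1 := by
    induction n with
    | zero => exact h
    | succ n ih => simpa only [pow_succ', Equiv.Perm.mul_apply] using hσ.nsmulPerm_apply_eq_one ih x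
  obtain ⟨n, hn⟩ : ∃ n, σ x ^ n = (σ x)⁻¹ :=
    hx.mem_powers_iff_mem_zpowers.mpr (inv_mem (Subgroup.mem_zpowers _))
  simpa [hn] using hpow n

theorem CycleIdentity.nsmulPerm_nsmulPerm_apply_eq_one_iff (hσ : CycleIdentity σ)
    (hfin : ∀ x, IsOfFinOrder (σ x)) (k i : ℕ) (x y : X) :
    nsmulPerm σ k (nsmulPerm σ i x y) = 1 ↔ nsmulPerm σ k y = 1 := by
  induction i with
  | zero => rfl
  | succ i ih =>
    rw [nsmulPerm_succ, Equiv.Perm.mul_apply, hσ.nsmulPerm_apply_eq_one_iff (hfin _), ih]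

theorem isOfFinOrder_apply [Finite (permutationGroup σ)] (x : X) : IsOfFinOrder (σ x) :=
  Submonoid.isOfFinOrder_coe.mpr <| isOfFinOrder_of_finite
    (⟨σ x, Subgroup.subset_closure (Set.mem_range_self x)⟩ : permutationGroup σ)

theorem exists_nsmulPerm_succ_nsmulPerm_apply_eq_one [Finite (permutationGroup σ)] (x : X) :
    ∃ i m, nsmulPerm σ (m + 1) (nsmulPerm σ i x x) = 1 := by
  let τ (i : ℕ) : permutationGroup σ := ⟨nsmulPerm σ i x, nsmulPerm_mem_permutationGroup i x⟩
  obtain ⟨i, j, hij, hτ⟩ : ∃ i j, i < j ∧ τ i = τ j := by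
    obtain ⟨i, j, hne, hτ⟩ := Finite.exists_ne_map_eq_of_infinite τ
    exact hne.lt_or_gt.elim (fun h ↦ ⟨i, j, h, hτ⟩) fun h ↦ ⟨j, i, h, hτ.symm⟩
  obtain ⟨m, rfl⟩ := Nat.exists_eq_add_of_lt hij
  have hperiod : nsmulPerm σ (i + (m + 1)) x = nsmulPerm σ i x := (congrArg Subtype.val hτ).symm
  exact ⟨i, m, mul_eq_right.mp (nsmulPerm_add i (m + 1) x ▸ hperiod)⟩

theorem CycleIdentity.exists_nsmulPerm_succ_eq_one [Finite (permutationGroup σ)]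
    (hσ : CycleIdentity σ) (x : X) : ∃ m, nsmulPerm σ (m + 1) x = 1 := by
  obtain ⟨i, m, hm⟩ := exists_nsmulPerm_succ_nsmulPerm_apply_eq_one (σ := σ) x
  exact ⟨m, (hσ.nsmulPerm_nsmulPerm_apply_eq_one_iff isOfFinOrder_apply _ i x x).mp hm⟩

theorem CycleIdentity.apply_self_eq_iff (hσ : CycleIdentity σ) {m : ℕ} {x y : X}
    (hx : nsmulPerm σ (m + 1) x = 1) (hfin : IsOfFinOrder (σ y)) :
    σ y y = x ↔ y = nsmulPerm σ m x x := by
  constructor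
  · rintro rfl
    have hy : nsmulPerm σ (m + 1) y = 1 := (hσ.nsmulPerm_apply_eq_one_iff hfin _ y).mp hx
    have hmul : nsmulPerm σ m (σ y y) * σ y = 1 := by
      rw [hσ.nsmulPerm_apply_mul, ← nsmulPerm_succ, hy]
    exact (Equiv.congr_fun hmul y).symm
  · rintro rfl
    exact Equiv.congr_fun hx x

end CycleSet

open CycleSet in
theorem stmt_14_general {X : Type*} (σ : X → Equiv.Perm X) [Finite (permutationGroup σ)]
    (hσ : CycleIdentity σ) : Function.Bijective (fun x : X => σ x x) := by
  refine (Function.bijective_iff_existsUnique _).mpr fun x ↦ ?_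
  obtain ⟨m, hm⟩ := hσ.exists_nsmulPerm_succ_eq_one x
  have hsolution (y : X) : σ y y = x ↔ y = nsmulPerm σ m x x :=
    hσ.apply_self_eq_iff hm (isOfFinOrder_apply y)
  exact ⟨nsmulPerm σ m x x, (hsolution _).mpr rfl, fun y hy ↦ (hsolution y).mp hy⟩

/-- Every finite cycle set is non-degenerate: if `X` is finite, the left
multiplications `σ x` are bijective, and the cycle identity holds, then the
map `x ↦ x·x` is a bijection. -/
theorem stmt_14 {X : Type*} [Finite X] (σ : X → X ≃ X)
    (hcyc : ∀ x y z : X, σ (σ x y) (σ x z) = σ (σ y x) (σ y z)) :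
    Function.Bijective (fun x : X => σ x x) :=
  stmt_14_general σ hcyc
end

section
/- Let (A,+) be an abelian group and · a binary operation on A such that every left multiplication σ_a : b ↦ a·b is a bijection; write a^b = σ_b^{-1}(a) and a∘b = a^b + b. Then (A,+,·) is a linear cycle set if and only if (a+b)^c = a^c + b^c and (a^b)^c = a^{b∘c} hold for all a, b, c ∈ A. -/
/-!
The law for `(a+b)·c` says `σ_{a+b} = σ_{a·b} σ_a`. Writing `d = a·b`, so that `b = d^a`, and
inverting both sides turns it into `(x^d)^a = x^{d∘a}`; likewise `σ_a` is additive exactly when its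
inverse is. The cycle set identity comes for free: its two sides are `(a+b)·c` and `(b+a)·c`.
-/

theorem map_add_iff_symm_map_add {M N : Type*} [Add M] [Add N] (e : M ≃ N) :
    (∀ x y, e (x + y) = e x + e y) ↔ ∀ x y, e.symm (x + y) = e.symm x + e.symm y :=
  ⟨fun h => map_add (AddEquiv.mk' e h).symm, fun h => map_add (AddEquiv.mk' e.symm h).symm⟩

theorem add_apply_iff_symm_symm_apply {A : Type*} [Add A] (σ : A → A ≃ A) (a : A) :
    (∀ b c, σ (a + b) c = σ (σ a b) (σ a c)) ↔
      ∀ b x, (σ a).symm ((σ b).symm x) = (σ (a + (σ a).symm b)).symm x := by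
  constructor
  · intro add_apply b x
    rw [Equiv.eq_symm_apply, add_apply]
    simp only [Equiv.apply_symm_apply]
  · intro symm_symm_apply b c
    have h := symm_symm_apply (σ a b) (σ (σ a b) (σ a c))
    simpa only [Equiv.symm_apply_apply, Equiv.eq_symm_apply] using h

theorem cycle_identity_of_add_apply {A : Type*} [AddCommMagma A] {op : A → A → A}
    (add_apply : ∀ a b c, op (a + b) c = op (op a b) (op a c)) (a b c : A) :
    op (op a b) (op a c) = op (op b a) (op b c) := by
  rw [← add_apply, ← add_apply, add_comm]

theorem stmt_15_general {A : Type*} [AddCommMagma A] (σ : A → A ≃ A) :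
    ((∀ a b c : A, σ (σ a b) (σ a c) = σ (σ b a) (σ b c)) ∧
     (∀ a b c : A, σ a (b + c) = σ a b + σ a c) ∧
     (∀ a b c : A, σ (a + b) c = σ (σ a b) (σ a c))) ↔
    ((∀ a b c : A, (σ c).symm (a + b) = (σ c).symm a + (σ c).symm b) ∧
     (∀ a b c : A,
        (σ c).symm ((σ b).symm a) = (σ ((σ c).symm b + c)).symm a)) := by
  constructor
  · rintro ⟨-, map_add, add_apply⟩
    refine ⟨fun a b c => (map_add_iff_symm_map_add (σ c)).mp (map_add c) a b, fun a b c => ?_⟩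
    rw [add_comm _ c]
    exact (add_apply_iff_symm_symm_apply σ c).mp (add_apply c) b a
  · rintro ⟨symm_map_add, symm_symm_apply⟩
    have add_apply (a : A) : ∀ b c, σ (a + b) c = σ (σ a b) (σ a c) := by
      refine (add_apply_iff_symm_symm_apply σ a).mpr fun b x => ?_
      rw [add_comm a]
      exact symm_symm_apply x b a
    exact ⟨cycle_identity_of_add_apply add_apply,
      fun a => (map_add_iff_symm_map_add (σ a)).mpr (symm_map_add · · a), add_apply⟩

/-- Let `(A,+)` be an abelian group with a binary operation whose left
multiplications `σ a` are bijections, and write `a^b = σ_b⁻¹(a)` and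
`a∘b = a^b + b`. Then `(A,+,·)` is a linear cycle set iff
`(a+b)^c = a^c + b^c` and `(a^b)^c = a^{b∘c}` for all `a, b, c`. -/
theorem stmt_15 {A : Type*} [AddCommGroup A] (σ : A → A ≃ A) :
    ((∀ a b c : A, σ (σ a b) (σ a c) = σ (σ b a) (σ b c)) ∧
     (∀ a b c : A, σ a (b + c) = σ a b + σ a c) ∧
     (∀ a b c : A, σ (a + b) c = σ (σ a b) (σ a c))) ↔
    ((∀ a b c : A, (σ c).symm (a + b) = (σ c).symm a + (σ c).symm b) ∧
     (∀ a b c : A,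
        (σ c).symm ((σ b).symm a) = (σ ((σ c).symm b + c)).symm a)) :=
  stmt_15_general σ
end

section
/- Let (A,+,·) be a linear cycle set and define the adjoint multiplication a∘b = a^b + b, where a^b = σ_b^{-1}(a). Then (A,+,∘) is a right brace: (A,∘) is a group with identity 0 in which the inverse of a is −(a·a), and (a+b)∘c + c = a∘c + b∘c for all a, b, c ∈ A. -/
/-- The adjoint multiplication `a∘b = a^b + b` of a linear cycle set with
left multiplications `σ`, where `a^b = σ_b⁻¹(a)`. -/
def circAdj {A : Type*} [AddCommGroup A] (σ : A → A ≃ A) (a b : A) : A :=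
  (σ b).symm a + b

/-!
The left multiplications of a linear cycle set are automorphisms of `(A,+)`, and commutativity of
`+` turns `(b+a)·c = (b·a)·(b·c)` into `σ_{a∘b} = σ_a σ_b`. Hence the pairs `(a, σ_a)` are closed
under the product `(a, f)(b, g) = (g⁻¹(a) + b, fg)` of the holomorph of `(A,+)`, and `∘` is the
group law which they carry.
-/

theorem leftMul_zero {M : Type*} [AddZeroClass M] {σ : M → M ≃+ M}
    (hσ : ∀ a b, σ (a + b) = (σ a).trans (σ (σ a b))) : σ 0 = AddEquiv.refl M := by
  ext c
  have h : σ 0 c = σ 0 (σ 0 c) := by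
    simpa only [add_zero, map_zero, AddEquiv.trans_apply] using DFunLike.congr_fun (hσ 0 0) c
  exact ((σ 0).injective h).symm

section AdjointMultiplication

variable {A : Type*} [AddCommGroup A] {σ : A → A ≃+ A}

local infixl:70 " ⊚ " => circAdj fun x => AddEquiv.toEquiv (σ x)

theorem circAdj_eq_symm_apply_add (a b : A) : a ⊚ b = (σ b).symm a + b := rfl

theorem zero_circAdj (a : A) : 0 ⊚ a = a := by
  rw [circAdj_eq_symm_apply_add, map_zero, zero_add]

theorem neg_apply_self_circAdj (a : A) : (-σ a a) ⊚ a = 0 := by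
  rw [circAdj_eq_symm_apply_add, map_neg, AddEquiv.symm_apply_apply, neg_add_cancel]

theorem add_circAdj_add (a b c : A) : (a + b) ⊚ c + c = a ⊚ c + b ⊚ c := by
  simp only [circAdj_eq_symm_apply_add, map_add]
  abel

theorem leftMul_circAdj (hσ : ∀ a b, σ (a + b) = (σ a).trans (σ (σ a b))) (a b : A) :
    σ (a ⊚ b) = (σ b).trans (σ a) := by
  rw [circAdj_eq_symm_apply_add, add_comm, hσ, AddEquiv.apply_symm_apply]

theorem leftMul_neg_apply_self (hσ : ∀ a b, σ (a + b) = (σ a).trans (σ (σ a b))) (a : A) :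
    σ (-σ a a) = (σ a).symm := by
  have h : (σ a).trans (σ (-σ a a)) = AddEquiv.refl A := by
    rw [← leftMul_circAdj hσ, neg_apply_self_circAdj, leftMul_zero hσ]
  ext c
  simpa only [AddEquiv.trans_apply, AddEquiv.apply_symm_apply, AddEquiv.refl_apply] using
    DFunLike.congr_fun h ((σ a).symm c)

theorem circAdj_assoc (hσ : ∀ a b, σ (a + b) = (σ a).trans (σ (σ a b))) (a b c : A) :
    a ⊚ b ⊚ c = a ⊚ (b ⊚ c) :=
  calc a ⊚ b ⊚ c
    _ = (σ c).symm ((σ b).symm a) + (σ c).symm b + c := by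
        simp only [circAdj_eq_symm_apply_add, map_add]
    _ = ((σ c).trans (σ b)).symm a + b ⊚ c := by
        rw [add_assoc, circAdj_eq_symm_apply_add, AddEquiv.symm_trans_apply]
    _ = a ⊚ (b ⊚ c) := by
        rw [← leftMul_circAdj hσ, ← circAdj_eq_symm_apply_add]

theorem circAdj_zero (hσ : ∀ a b, σ (a + b) = (σ a).trans (σ (σ a b))) (a : A) :
    a ⊚ 0 = a := by
  rw [circAdj_eq_symm_apply_add, leftMul_zero hσ, AddEquiv.refl_symm, AddEquiv.refl_apply,
    add_zero]

theorem circAdj_neg_apply_self (hσ : ∀ a b, σ (a + b) = (σ a).trans (σ (σ a b))) (a : A) :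
    a ⊚ (-σ a a) = 0 := by
  rw [circAdj_eq_symm_apply_add, leftMul_neg_apply_self hσ, AddEquiv.symm_symm, add_neg_cancel]

end AdjointMultiplication

/-- If `(A,+,·)` is a linear cycle set, then `(A,+,∘)` with the adjoint
multiplication `a∘b = a^b + b` is a right brace: `∘` is associative with
identity `0`, the `∘`-inverse of `a` is `−(a·a)`, and
`(a+b)∘c + c = a∘c + b∘c`. -/
theorem stmt_16 {A : Type*} [AddCommGroup A] (σ : A → A ≃ A)
    (hcyc : ∀ a b c : A, σ (σ a b) (σ a c) = σ (σ b a) (σ b c))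
    (hl : ∀ a b c : A, σ a (b + c) = σ a b + σ a c)
    (hr : ∀ a b c : A, σ (a + b) c = σ (σ a b) (σ a c)) :
    (∀ a b c : A, circAdj σ (circAdj σ a b) c = circAdj σ a (circAdj σ b c)) ∧
    (∀ a : A, circAdj σ a 0 = a ∧ circAdj σ 0 a = a) ∧
    (∀ a : A, circAdj σ a (-(σ a a)) = 0 ∧ circAdj σ (-(σ a a)) a = 0) ∧
    (∀ a b c : A,
      circAdj σ (a + b) c + c = circAdj σ a c + circAdj σ b c) := by
  obtain ⟨σ, rfl⟩ : ∃ τ : A → A ≃+ A, σ = fun a => (τ a).toEquiv :=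
    ⟨fun a => AddEquiv.mk' (σ a) (hl a), rfl⟩
  have hσ : ∀ a b, σ (a + b) = (σ a).trans (σ (σ a b)) := fun a b => AddEquiv.ext (hr a b)
  exact ⟨circAdj_assoc hσ,
    fun a => ⟨circAdj_zero hσ a, zero_circAdj a⟩,
    fun a => ⟨circAdj_neg_apply_self hσ a, neg_apply_self_circAdj a⟩,
    add_circAdj_add⟩
end

section
/- Let (B,+,∘) be a right brace and for a ∈ B define λᵒᵖ_a : B → B by λᵒᵖ_a(b) = b∘a − a. Then each λᵒᵖ_a is a bijection, and the operation a·b := (λᵒᵖ_a)^{-1}(b) makes (B,+,·) a linear cycle set whose adjoint multiplication a^b + b (where a^b = σ_b^{-1}(a) = λᵒᵖ_b(a)) coincides with the brace multiplication ∘. Consequently, the assignment of theorem sending a linear cycle set (A,+,·) to the right brace (A,+,∘) is a bijection between linear cycle set structures and right brace structures on a given abelian group. -/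
/-- A right brace: `(B,+)` is an abelian group, `(B,∘)` is a group, and
`(a+b)∘c + c = a∘c + b∘c`. -/
class RightBrace (B : Type*) extends AddCommGroup B where
  circ : B → B → B
  circ_assoc : ∀ a b c : B, circ (circ a b) c = circ a (circ b c)
  cone : B
  circ_cone : ∀ a : B, circ a cone = a
  cone_circ : ∀ a : B, circ cone a = a
  cinv : B → B
  circ_cinv : ∀ a : B, circ a (cinv a) = cone
  cinv_circ : ∀ a : B, circ (cinv a) a = cone
  right_brace : ∀ a b c : B, circ (a + b) c + c = circ a c + circ b c

/-- The opposite lambda map of a right brace: `λᵒᵖ_a(b) = b∘a − a`. -/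
def lamop {B : Type*} [RightBrace B] (a b : B) : B := RightBrace.circ b a - a

/-- The cycle set operation `a·b := (λᵒᵖ_a)⁻¹(b)` of a right brace. -/
noncomputable def dotOp {B : Type*} [RightBrace B] (a b : B) : B :=
  Function.invFun (lamop a) b

/-- A linear cycle set structure on an abelian group `A`: a binary operation
with bijective left multiplications satisfying the cycle set identity and the
linearity laws. -/
structure LcsOn (A : Type*) [AddCommGroup A] where
  smul : A → A → A
  bij : ∀ a : A, Function.Bijective (smul a)
  cyc : ∀ a b c : A, smul (smul a b) (smul a c) = smul (smul b a) (smul b c)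
  ldist : ∀ a b c : A, smul a (b + c) = smul a b + smul a c
  rlaw : ∀ a b c : A, smul (a + b) c = smul (smul a b) (smul a c)

/-- A right brace structure on an abelian group `A`: an operation `∘` making
`A` a group and satisfying `(a+b)∘c + c = a∘c + b∘c`. -/
structure RbOn (A : Type*) [AddCommGroup A] where
  circ : A → A → A
  assoc : ∀ a b c : A, circ (circ a b) c = circ a (circ b c)
  isGroup : ∃ e : A, (∀ a : A, circ a e = a ∧ circ e a = a) ∧
    ∀ a : A, ∃ b : A, circ a b = e ∧ circ b a = e
  rbrace : ∀ a b c : A, circ (a + b) c + c = circ a c + circ b c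

/-!
Multiplication in a right brace is recovered from the maps `λᵒᵖ_a` by `a ∘ b = λᵒᵖ_b(a) + b`,
and in a linear cycle set `a^b = σ_b⁻¹(a)` plays the role of `λᵒᵖ_b(a)`. Under `λᵒᵖ_a = σ_a⁻¹`
the brace law says that each `λᵒᵖ_a` is additive, as is each `σ_a`, and associativity of `∘`
says that `λᵒᵖ_{a ∘ b} = λᵒᵖ_b λᵒᵖ_a`; inverting this with `(a · b) ∘ a = a + b` gives
`σ_{a + b} = σ_{a · b} σ_a`. The cycle set identity is then the symmetry of `a + b`.
-/

attribute [ext] LcsOn RbOn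

theorem invFun_coe_equiv {α β : Type*} [Nonempty α] (e : α ≃ β) :
    Function.invFun e = e.symm :=
  Function.invFun_eq_of_injective_of_rightInverse e.injective e.apply_symm_apply

namespace LcsOn

variable {A : Type*} [AddCommGroup A] (L : LcsOn A)

/-- The left multiplication `σ_a` of a linear cycle set, as an additive automorphism. -/
noncomputable def leftMul (a : A) : A ≃+ A :=
  AddEquiv.ofBijective (AddMonoidHom.mk' (L.smul a) (L.ldist a)) (L.bij a)

theorem leftMul_apply (a b : A) : L.leftMul a b = L.smul a b := rfl

theorem leftMul_add (a b : A) : L.leftMul (a + b) = (L.leftMul a).trans (L.leftMul (L.smul a b)) :=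
  AddEquiv.ext (L.rlaw a b)

/-- The adjoint multiplication `a ∘ b = a^b + b` of a linear cycle set, where `a^b = σ_b⁻¹(a)`. -/
noncomputable def adjointMul (a b : A) : A := (L.leftMul b).symm a + b

theorem adjointMul_eq_invFun (a b : A) :
    L.adjointMul a b = Function.invFun (L.smul b) a + b :=
  congrArg (· + b) (congrFun (invFun_coe_equiv (L.leftMul b).toEquiv) a).symm

theorem leftMul_adjointMul (a b : A) :
    L.leftMul (L.adjointMul a b) = (L.leftMul b).trans (L.leftMul a) := by
  rw [adjointMul, add_comm, leftMul_add, ← leftMul_apply, AddEquiv.apply_symm_apply]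

theorem adjointMul_assoc (a b c : A) :
    L.adjointMul (L.adjointMul a b) c = L.adjointMul a (L.adjointMul b c) := by
  calc L.adjointMul (L.adjointMul a b) c
      = (L.leftMul c).symm ((L.leftMul b).symm a) + ((L.leftMul c).symm b + c) := by
        simp only [adjointMul, map_add, add_assoc]
    _ = (L.leftMul (L.adjointMul b c)).symm a + L.adjointMul b c := by
        rw [leftMul_adjointMul, AddEquiv.symm_trans_apply, ← adjointMul]

theorem zero_adjointMul (a : A) : L.adjointMul 0 a = a := by
  rw [adjointMul, map_zero, zero_add]

theorem smul_neg_adjointMul (a : A) : L.adjointMul (L.smul a (-a)) a = 0 := by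
  rw [adjointMul, ← leftMul_apply, AddEquiv.symm_apply_apply, neg_add_cancel]

theorem add_adjointMul_add (a b c : A) :
    L.adjointMul (a + b) c + c = L.adjointMul a c + L.adjointMul b c := by
  simp only [adjointMul, map_add]
  abel

/-- The group of a linear cycle set under its adjoint multiplication. -/
noncomputable abbrev adjointGroup : Group A :=
  letI : Mul A := ⟨L.adjointMul⟩
  letI : Inv A := ⟨fun a => L.smul a (-a)⟩
  letI : One A := ⟨0⟩
  Group.ofLeftAxioms L.adjointMul_assoc L.zero_adjointMul L.smul_neg_adjointMul

/-- The right brace structure given by the adjoint multiplication of a linear cycle set. -/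
noncomputable def toRbOn : RbOn A where
  circ := L.adjointMul
  assoc := L.adjointMul_assoc
  isGroup :=
    letI := L.adjointGroup
    ⟨1, fun a => ⟨mul_one a, one_mul a⟩, fun a => ⟨a⁻¹, mul_inv_cancel a, inv_mul_cancel a⟩⟩
  rbrace := L.add_adjointMul_add

end LcsOn

namespace RightBrace

variable {B : Type*} [RightBrace B]

theorem lamop_add_self (a b : B) : lamop b a + b = circ a b :=
  sub_add_cancel _ _

theorem lamop_add (a b c : B) : lamop a (b + c) = lamop a b + lamop a c := by
  have add_circ : circ (b + c) a = circ b a + circ c a - a :=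
    eq_sub_of_add_eq (right_brace b c a)
  simp only [lamop, add_circ]
  abel

/-- The map `λᵒᵖ_a` of a right brace, as an additive automorphism. -/
def lamopEquiv (a : B) : B ≃+ B where
  toFun := lamop a
  invFun b := circ (b + a) (cinv a)
  left_inv b := by
    change circ (lamop a b + a) (cinv a) = b
    rw [lamop_add_self, circ_assoc, circ_cinv, circ_cone]
  right_inv b := by
    change lamop a (circ (b + a) (cinv a)) = b
    rw [lamop, circ_assoc, cinv_circ, circ_cone, add_sub_cancel_right]
  map_add' := lamop_add a

theorem lamop_bijective (a : B) : Function.Bijective (lamop a) :=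
  (lamopEquiv a).bijective

theorem dotOp_eq_lamopEquiv_symm (a : B) : dotOp a = (lamopEquiv a).symm :=
  invFun_coe_equiv (lamopEquiv a).toEquiv

theorem dotOp_eq_iff {a b c : B} : dotOp a b = c ↔ lamop a c = b := by
  rw [dotOp_eq_lamopEquiv_symm, AddEquiv.symm_apply_eq, eq_comm]
  rfl

theorem lamop_dotOp (a b : B) : lamop a (dotOp a b) = b :=
  dotOp_eq_iff.mp rfl

theorem dotOp_bijective (a : B) : Function.Bijective (dotOp a) := by
  rw [dotOp_eq_lamopEquiv_symm]
  exact (lamopEquiv a).symm.bijective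

theorem dotOp_add (a b c : B) : dotOp a (b + c) = dotOp a b + dotOp a c := by
  simp only [dotOp_eq_lamopEquiv_symm, map_add]

theorem invFun_dotOp (a : B) : Function.invFun (dotOp a) = lamop a := by
  rw [dotOp_eq_lamopEquiv_symm]
  exact invFun_coe_equiv (lamopEquiv a).symm.toEquiv

theorem lamop_circ (a b c : B) : lamop (circ a b) c = lamop b (lamop a c) := by
  apply add_right_cancel (b := circ a b)
  calc lamop (circ a b) c + circ a b = circ (circ c a) b := by rw [lamop_add_self, circ_assoc]
    _ = lamop b (lamop a c + a) + b := by rw [lamop_add_self, lamop_add_self]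
    _ = lamop b (lamop a c) + circ a b := by rw [lamop_add, add_assoc, lamop_add_self]

theorem circ_dotOp_self (a b : B) : circ (dotOp a b) a = a + b := by
  rw [← lamop_add_self, lamop_dotOp, add_comm]

theorem dotOp_add_left (a b c : B) : dotOp (a + b) c = dotOp (dotOp a b) (dotOp a c) := by
  rw [dotOp_eq_iff, ← circ_dotOp_self, lamop_circ, lamop_dotOp, lamop_dotOp]

theorem dotOp_cycle (a b c : B) :
    dotOp (dotOp a b) (dotOp a c) = dotOp (dotOp b a) (dotOp b c) := by
  rw [← dotOp_add_left, ← dotOp_add_left, add_comm]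

variable (B) in
/-- The linear cycle set of a right brace. -/
noncomputable def toLcsOn : LcsOn B where
  smul := dotOp
  bij := dotOp_bijective
  cyc := dotOp_cycle
  ldist := dotOp_add
  rlaw := dotOp_add_left

theorem adjointMul_toLcsOn (a b : B) : (toLcsOn B).adjointMul a b = circ a b := by
  calc (toLcsOn B).adjointMul a b = Function.invFun (dotOp b) a + b :=
        (toLcsOn B).adjointMul_eq_invFun a b
    _ = circ a b := by rw [invFun_dotOp, lamop_add_self]

end RightBrace

section Correspondence

variable {A : Type*} [AddCommGroup A]

/-- The right brace on `A` defined by a right brace structure, with the identity and the inverses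
of `∘` chosen from their existence. -/
noncomputable abbrev RbOn.toRightBrace (R : RbOn A) : RightBrace A where
  circ := R.circ
  circ_assoc := R.assoc
  cone := R.isGroup.choose
  circ_cone a := (R.isGroup.choose_spec.1 a).1
  cone_circ a := (R.isGroup.choose_spec.1 a).2
  cinv a := (R.isGroup.choose_spec.2 a).choose
  circ_cinv a := (R.isGroup.choose_spec.2 a).choose_spec.1
  cinv_circ a := (R.isGroup.choose_spec.2 a).choose_spec.2
  right_brace := R.rbrace

/-- The linear cycle set structure `a · b = (λᵒᵖ_a)⁻¹(b)` of a right brace structure. -/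
noncomputable def RbOn.toLcsOn (R : RbOn A) : LcsOn A :=
  letI := R.toRightBrace
  RightBrace.toLcsOn A

theorem LcsOn.toLcsOn_toRbOn (L : LcsOn A) : L.toRbOn.toLcsOn = L := by
  let _ := L.toRbOn.toRightBrace
  ext a b
  have lamop_smul : lamop a (L.smul a b) = b := by
    calc lamop a (L.smul a b) = (L.leftMul a).symm (L.leftMul a b) + a - a := rfl
      _ = b := by rw [AddEquiv.symm_apply_apply, add_sub_cancel_right]
  exact RightBrace.dotOp_eq_iff.mpr lamop_smul

theorem RbOn.toRbOn_toLcsOn (R : RbOn A) : R.toLcsOn.toRbOn = R := by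
  let _ := R.toRightBrace
  ext a b
  exact RightBrace.adjointMul_toLcsOn a b

/-- The bijection between linear cycle set structures and right brace structures on an abelian
group given by the adjoint multiplication. -/
noncomputable def lcsOnEquivRbOn : LcsOn A ≃ RbOn A where
  toFun := LcsOn.toRbOn
  invFun := RbOn.toLcsOn
  left_inv := LcsOn.toLcsOn_toRbOn
  right_inv := RbOn.toRbOn_toLcsOn

end Correspondence

theorem stmt_17_general.{u, v} :
    (∀ (B : Type u) [RightBrace B],
      (∀ a : B, Function.Bijective (lamop a)) ∧
      (∀ a : B, Function.Bijective (dotOp a)) ∧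
      (∀ x y z : B,
        dotOp (dotOp x y) (dotOp x z) = dotOp (dotOp y x) (dotOp y z)) ∧
      (∀ a b c : B, dotOp a (b + c) = dotOp a b + dotOp a c) ∧
      (∀ a b c : B, dotOp (a + b) c = dotOp (dotOp a b) (dotOp a c)) ∧
      (∀ a b : B, Function.invFun (dotOp b) a = lamop b a) ∧
      (∀ a b : B, lamop b a + b = RightBrace.circ a b)) ∧
    (∀ (A : Type v) [AddCommGroup A],
      ∃ F : LcsOn A → RbOn A,
        (∀ (L : LcsOn A) (a b : A),
          (F L).circ a b = Function.invFun (L.smul b) a + b) ∧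
        Function.Bijective F) :=
  ⟨fun _ _ => ⟨RightBrace.lamop_bijective, RightBrace.dotOp_bijective, RightBrace.dotOp_cycle,
      RightBrace.dotOp_add, RightBrace.dotOp_add_left,
      fun a b => congrFun (RightBrace.invFun_dotOp b) a, RightBrace.lamop_add_self⟩,
    fun _ _ => ⟨lcsOnEquivRbOn, LcsOn.adjointMul_eq_invFun, lcsOnEquivRbOn.bijective⟩⟩

/-- Every right brace `(B,+,∘)` gives a linear cycle set via
`a·b := (λᵒᵖ_a)⁻¹(b)` with `λᵒᵖ_a(b) = b∘a − a`, whose adjoint multiplication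
`a^b + b` (with `a^b = σ_b⁻¹(a) = λᵒᵖ_b(a)`) is `∘`; consequently, on any
abelian group, the assignment sending a linear cycle set structure to its
adjoint right brace structure is a bijection. -/
theorem stmt_17 :
    (∀ (B : Type) [inst : RightBrace B],
      (∀ a : B, Function.Bijective (lamop a)) ∧
      (∀ a : B, Function.Bijective (dotOp a)) ∧
      (∀ x y z : B,
        dotOp (dotOp x y) (dotOp x z) = dotOp (dotOp y x) (dotOp y z)) ∧
      (∀ a b c : B, dotOp a (b + c) = dotOp a b + dotOp a c) ∧
      (∀ a b c : B, dotOp (a + b) c = dotOp (dotOp a b) (dotOp a c)) ∧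
      (∀ a b : B, Function.invFun (dotOp b) a = lamop b a) ∧
      (∀ a b : B, lamop b a + b = RightBrace.circ a b)) ∧
    (∀ (A : Type) [inst : AddCommGroup A],
      ∃ F : LcsOn A → RbOn A,
        (∀ (L : LcsOn A) (a b : A),
          (F L).circ a b = Function.invFun (L.smul b) a + b) ∧
        Function.Bijective F) := by
  exact stmt_17_general
end
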